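/- arXiv:1811.00042 — 2 statements merged into one kernel-verified Lean document; each statement's English description precedes it below -/
import Mathlib

section
/- Let (R, m) be a reduced 1-dimensional Noetherian local ring with finite normalization R̄ and conductor c, and assume R is Gorenstein. Then length_R(R̄/R) = length_R(R/c); equivalently length_R(R̄/c) = 2·length_R(R/c) (the 'n = 2δ' theorem). -/
open CategoryTheory IsLocalRing

set_option synthInstance.maxHeartbeats 1000000
set_option maxHeartbeats 1600000

/-- The length of a module, as the Krull dimension of its lattice of submodules. -/
noncomputable def mlen (R M : Type) [Ring R] [AddCommGroup M] [Module R M] : WithBot ℕ∞ :=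
  Order.krullDim (Submodule R M)

/-- `extM R M N n` is `Ext^n_R(M, N)`. -/
noncomputable def extM (R : Type) [CommRing R] (M N : Type)
    [AddCommGroup M] [Module R M] [AddCommGroup N] [Module R N] (n : ℕ) : ModuleCat R :=
  ((Ext R (ModuleCat R) n).obj (Opposite.op (ModuleCat.of R M))).obj (ModuleCat.of R N)

/-- The length of the localization `M_P` over `R_P`. -/
noncomputable def locLen (R : Type) [CommRing R] (M : Type) [AddCommGroup M] [Module R M]
    (P : PrimeSpectrum R) : WithBot ℕ∞ :=
  mlen (Localization.AtPrime P.asIdeal) (LocalizedModule P.asIdeal.primeCompl M)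


open HomologicalComplex in
lemma ext_part (R : Type) [CommRing R] [IsLocalRing R] :
    ∃ φ : (maximalIdeal R →ₗ[R] R) →ₗ[R] extM R (ResidueField R) R 1,
      ∀ f, φ f = 0 → ∃ r : R, ∀ y : maximalIdeal R, f y = r * y := by
  let X : ModuleCat R := ModuleCat.of R (ResidueField R)
  let Y : ModuleCat R := ModuleCat.of R R
  let P : ProjectiveResolution X := ProjectiveResolution.of X
  let K := P.complex.linearYonedaObj R Y
  let S := K.sc' 0 1 2
  let e1 : extM R (ResidueField R) R 1 ≅ S.homology :=
    P.isoExt 1 Y ≪≫ ShortComplex.homologyMapIso (K.isoSc' 0 1 2 (by simp) (by simp))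
  let e2 := (e1 ≪≫ S.moduleCatHomologyIso).toLinearEquiv
  -- lifts
  let res : R →ₗ[R] ResidueField R := Algebra.linearMap R (ResidueField R)
  have hres : Function.Surjective res := IsLocalRing.residue_surjective
  let ρ : Y ⟶ X := ModuleCat.ofHom res
  have : Epi ρ := (ModuleCat.epi_iff_surjective _).2 hres
  let π : P.complex.X 0 ⟶ X := P.π.f 0
  have hπs : Function.Surjective π := (ModuleCat.epi_iff_surjective _).1 (inferInstanceAs (Epi (P.π.f 0)))
  let g : P.complex.X 0 ⟶ Y := Projective.factorThru π ρ
  have hg : g ≫ ρ = π := Projective.factorThru_comp _ _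
  have hg' : ∀ x, res (g x) = π x := fun x => congr($hg x)
  have hdπ : ∀ z, π (P.complex.d 1 0 z) = 0 := fun z =>
    congr($(P.complex_d_comp_π_f_zero) z)
  have hex : ∀ x, π x = 0 → ∃ z, P.complex.d 1 0 z = x := fun x hx =>
    (ShortComplex.moduleCat_exact_iff _).1 P.exact₀ x hx
  have hmem : ∀ z, (g.hom ∘ₗ (P.complex.d 1 0).hom) z ∈ maximalIdeal R := by
    intro z
    rw [← IsLocalRing.residue_eq_zero_iff]
    exact (hg' _).trans (hdπ z)
  let q : P.complex.X 1 →ₗ[R] maximalIdeal R :=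
    LinearMap.codRestrict (maximalIdeal R) (g.hom ∘ₗ (P.complex.d 1 0).hom) hmem
  let ψ : (maximalIdeal R →ₗ[R] R) →ₗ[R] S.X₂ :=
    { toFun := fun f => (ModuleCat.ofHom (f ∘ₗ q) : P.complex.X 1 ⟶ Y)
      map_add' := fun f f' => rfl
      map_smul' := fun r f => rfl }
  have hψ : ∀ f, ψ f ∈ LinearMap.ker S.g.hom := by
    intro f
    rw [LinearMap.mem_ker]
    change P.complex.d 2 1 ≫ (ModuleCat.ofHom (f ∘ₗ q) : P.complex.X 1 ⟶ Y) = 0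
    ext z
    change f (q (P.complex.d 2 1 z)) = 0
    have : q (P.complex.d 2 1 z) = 0 := by
      apply Subtype.ext
      change g (P.complex.d 1 0 (P.complex.d 2 1 z)) = 0
      have h : P.complex.d 1 0 (P.complex.d 2 1 z) = 0 := congr($(P.complex.d_comp_d 2 1 0) z)
      rw [h, map_zero]
    rw [this, map_zero]
  let φ0 := LinearMap.codRestrict (LinearMap.ker S.g.hom) ψ hψ
  let φ1 : (maximalIdeal R →ₗ[R] R) →ₗ[R] S.moduleCatLeftHomologyData.H :=
    (Submodule.mkQ _) ∘ₗ φ0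
  refine ⟨e2.symm.toLinearMap ∘ₗ φ1, fun f hf => ?_⟩
  have hf1 : φ1 f = 0 := by
    apply e2.symm.injective
    rw [map_zero]; exact hf
  have hf2 := (Submodule.Quotient.mk_eq_zero _).1 hf1
  obtain ⟨h, hh⟩ := hf2
  have hh' : S.f h = ψ f := congrArg Subtype.val hh
  let h : P.complex.X 0 ⟶ Y := h
  have hh2 : P.complex.d 1 0 ≫ h = (ModuleCat.ofHom (f ∘ₗ q) : P.complex.X 1 ⟶ Y) := hh'
  have hh3 : ∀ z, h (P.complex.d 1 0 z) = f (q z) := fun z => congr($hh2 z)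
  obtain ⟨u1, hu1⟩ := hπs (res 1)
  have he : IsUnit (g u1 : R) := by
    by_contra hn
    have h0 : (g u1 : R) ∈ maximalIdeal R := hn
    rw [← IsLocalRing.residue_eq_zero_iff] at h0
    have h1 : res (g u1) = 0 := h0
    rw [hg', hu1] at h1
    exact one_ne_zero ((map_one (algebraMap R (ResidueField R))).symm.trans h1)
  obtain ⟨e, he⟩ := he
  refine ⟨(↑e⁻¹ : R) * (h u1 : R), fun y => ?_⟩
  obtain ⟨z, hz⟩ := hex ((y : R) • u1) (by
    rw [map_smul, hu1, ← map_smul]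
    have := (IsLocalRing.residue_eq_zero_iff (y : R)).2 y.2
    rw [smul_eq_mul, mul_one]
    exact this)
  have h1 := hh3 z
  rw [hz] at h1
  have h2 : q z = (e : R) • y := by
    apply Subtype.ext
    change g (P.complex.d 1 0 z) = (e : R) * y
    rw [hz, map_smul, he, mul_comm]; rfl
  rw [h2, map_smul, map_smul] at h1
  have h3 : (y : R) * (h u1 : R) = (e : R) * f y := h1
  rw [mul_assoc, mul_comm (h u1 : R), h3, ← mul_assoc, Units.inv_mul, one_mul]

section lens
variable {R M : Type} [CommRing R] [AddCommGroup M] [Module R M]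

/-- relative length -/
noncomputable def rlen (A B : Submodule R M) : ℕ∞ :=
  Module.length R (B ⧸ Submodule.comap B.subtype A)

lemma rlen_add {A B C : Submodule R M} (h1 : A ≤ B) (h2 : B ≤ C) :
    rlen A C = rlen A B + rlen B C := by
  unfold rlen
  let f : (B ⧸ Submodule.comap B.subtype A) →ₗ[R] (C ⧸ Submodule.comap C.subtype A) :=
    Submodule.mapQ _ _ (Submodule.inclusion h2) (fun x hx => hx)
  let g : (C ⧸ Submodule.comap C.subtype A) →ₗ[R] (C ⧸ Submodule.comap C.subtype B) :=
    Submodule.mapQ _ _ LinearMap.id (fun x hx => h1 hx)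
  refine Module.length_eq_add_of_exact f g ?_ ?_ ?_
  · rw [← LinearMap.ker_eq_bot, LinearMap.ker_eq_bot']
    intro x
    obtain ⟨x, rfl⟩ := Submodule.mkQ_surjective _ x
    intro h
    exact (Submodule.Quotient.mk_eq_zero _).2
      ((Submodule.Quotient.mk_eq_zero (Submodule.comap C.subtype A)).1 h)
  · intro x
    obtain ⟨x, rfl⟩ := Submodule.mkQ_surjective _ x
    exact ⟨Submodule.Quotient.mk x, rfl⟩
  · intro x
    obtain ⟨x, rfl⟩ := Submodule.mkQ_surjective _ x
    constructor
    · intro h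
      have h' : (x : M) ∈ B :=
        (Submodule.Quotient.mk_eq_zero (Submodule.comap C.subtype B)).1 h
      exact ⟨Submodule.Quotient.mk ⟨x, h'⟩, rfl⟩
    · rintro ⟨y, hy⟩
      obtain ⟨y, rfl⟩ := Submodule.mkQ_surjective _ y
      rw [← hy]
      exact (Submodule.Quotient.mk_eq_zero _).2 y.2

lemma rlen_mono {A B C : Submodule R M} (h1 : A ≤ B) (h2 : B ≤ C) :
    rlen A B ≤ rlen A C := by
  rw [rlen_add h1 h2]; exact le_self_add

lemma rlen_self (A : Submodule R M) : rlen A A = 0 := by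
  unfold rlen
  rw [Module.length_eq_zero_iff, Submodule.Quotient.subsingleton_iff]
  ext x; simp

lemma rlen_eq_one {A B : Submodule R M} (h : A ⋖ B) : rlen A B = 1 :=
  Module.length_eq_one_iff.2 ((covBy_iff_quot_is_simple h.le).1 h)

lemma exists_covBy {A B : Submodule R M} (h : A < B) (hf : rlen A B ≠ ⊤) :
    ∃ K, A ≤ K ∧ K ⋖ B := by
  have hf' := Module.length_ne_top_iff.1 hf
  obtain ⟨h1, h2⟩ := isFiniteLength_iff_isNoetherian_isArtinian.1 hf'
  have : Nontrivial (B ⧸ Submodule.comap B.subtype A) := by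
    rw [Submodule.Quotient.nontrivial_iff]
    intro h3
    apply h.not_ge
    intro x hx
    have : (⟨x, hx⟩ : B) ∈ Submodule.comap B.subtype A := h3 ▸ Submodule.mem_top
    exact this
  obtain ⟨N, hN, -⟩ := (eq_top_or_exists_le_coatom
    (⊥ : Submodule R (B ⧸ Submodule.comap B.subtype A))).resolve_left bot_ne_top
  let N' := N.comap (Submodule.mkQ _)
  have hN' : IsCoatom N' := by
    exact Submodule.isCoatom_comap_iff (Submodule.mkQ_surjective _) |>.2 hN
  refine ⟨N'.map B.subtype, ?_, ?_⟩
  · intro x hx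
    refine ⟨⟨x, h.le hx⟩, ?_, rfl⟩
    change Submodule.Quotient.mk _ ∈ N
    rw [(Submodule.Quotient.mk_eq_zero _).2 (show (⟨x, h.le hx⟩ : B) ∈ Submodule.comap B.subtype A from hx)]
    exact zero_mem _
  · rw [covBy_iff_quot_is_simple (Submodule.map_subtype_le _ _), isSimpleModule_iff_isCoatom,
      Submodule.comap_map_eq_of_injective (Submodule.injective_subtype _)]
    exact hN'

end lens

section dual
variable {R Q : Type} [CommRing R] [IsLocalRing R] [CommRing Q] [Algebra R Q]

lemma dual_covBy (h1 : rlen (1 : Submodule R Q)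
      (1 / Submodule.map (Algebra.linearMap R Q) (maximalIdeal R)) ≤ 1)
    {I J : Submodule R Q} (h : I ⋖ J) : rlen (1 / J) (1 / I) ≤ 1 := by
  refine le_trans ?_ h1
  obtain ⟨t, htJ, htI⟩ := Set.exists_of_ssubset h.lt
  have hsup : I ⊔ Submodule.span R {t} = J := by
    rcases h.eq_or_eq le_sup_left
      (sup_le h.le ((Submodule.span_singleton_le_iff_mem _ _).2 htJ)) with h' | h'
    · exact absurd (h' ▸ Submodule.mem_sup_right (Submodule.mem_span_singleton_self t)) htI
    · exact h'
  have hm : ∀ a ∈ maximalIdeal R, a • t ∈ I := by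
    intro a ha
    by_contra hat
    have h' : I ⊔ Submodule.span R {a • t} = J := by
      rcases h.eq_or_eq (c := I ⊔ Submodule.span R {a • t}) le_sup_left
        (sup_le h.le ((Submodule.span_singleton_le_iff_mem _ _).2 (J.smul_mem _ htJ))) with h' | h'
      · exact absurd (h' ▸ Submodule.mem_sup_right (Submodule.mem_span_singleton_self _)) hat
      · exact h'
    rw [← h', SetLike.mem_coe, Submodule.mem_sup] at htJ
    obtain ⟨y, hy, z, hz, hyz⟩ := htJ
    obtain ⟨b, rfl⟩ := Submodule.mem_span_singleton.1 hz
    have hu : IsUnit (1 - b * a) := by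
      by_contra hn
      have h2 : (1 - b * a) ∈ maximalIdeal R := hn
      have h3 := add_mem h2 ((maximalIdeal R).mul_mem_left b ha)
      rw [sub_add_cancel] at h3
      exact (Ideal.ne_top_iff_one _).1 (maximalIdeal.isMaximal R).ne_top h3
    have h4 : (1 - b * a) • t = y := by
      rw [sub_smul, one_smul, mul_smul, sub_eq_iff_eq_add, hyz]
    obtain ⟨u, hu⟩ := hu
    apply htI
    have h5 : t = (↑u⁻¹ : R) • y := by
      rw [← h4, ← hu, smul_smul, Units.inv_mul, one_smul]
    rw [h5]
    exact I.smul_mem _ hy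
  have hmem : ∀ f : (1 / I : Submodule R Q), (LinearMap.mulRight R t ∘ₗ (1 / I : Submodule R Q).subtype) f ∈
      (1 / Submodule.map (Algebra.linearMap R Q) (maximalIdeal R) : Submodule R Q) := by
    intro f
    rw [Submodule.mem_div_iff_forall_mul_mem]
    rintro _ ⟨a, ha, rfl⟩
    have := Submodule.mem_div_iff_forall_mul_mem.1 f.2 _ (hm a ha)
    convert this using 1
    simp [Algebra.smul_def]
    ring
  let F := LinearMap.codRestrict _ _ hmem
  have key : ∀ f : (1 / I : Submodule R Q), (f : Q) * t ∈ (1 : Submodule R Q) → (f : Q) ∈ (1 / J : Submodule R Q) := by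
    intro f hf
    rw [Submodule.mem_div_iff_forall_mul_mem]
    intro y hy
    rw [← hsup, Submodule.mem_sup] at hy
    obtain ⟨x, hx, z, hz, rfl⟩ := hy
    obtain ⟨b, rfl⟩ := Submodule.mem_span_singleton.1 hz
    rw [mul_add, mul_smul_comm]
    exact add_mem (Submodule.mem_div_iff_forall_mul_mem.1 f.2 _ hx) (Submodule.smul_mem _ _ hf)
  refine Module.length_le_of_injective (Submodule.mapQ _ _ F ?_) ?_
  · intro f hf
    exact Submodule.mem_div_iff_forall_mul_mem.1 (show (f : Q) ∈ (1 / J : Submodule R Q) from hf) t htJ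
  · rw [← LinearMap.ker_eq_bot, LinearMap.ker_eq_bot']
    intro x
    obtain ⟨x, rfl⟩ := Submodule.mkQ_surjective _ x
    intro h
    refine (Submodule.Quotient.mk_eq_zero _).2 ?_
    exact key x ((Submodule.Quotient.mk_eq_zero (Submodule.comap
      (1 / Submodule.map (Algebra.linearMap R Q) (maximalIdeal R)).subtype 1)).1 h)

lemma one_div_anti {I J : Submodule R Q} (h : I ≤ J) : 1 / J ≤ 1 / I := by
  intro x hx
  rw [Submodule.mem_div_iff_forall_mul_mem] at hx ⊢
  exact fun y hy => hx y (h hy)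

lemma dual_le (h1 : rlen (1 : Submodule R Q)
      (1 / Submodule.map (Algebra.linearMap R Q) (maximalIdeal R)) ≤ 1)
    {I J : Submodule R Q} (h : I ≤ J) : rlen (1 / J) (1 / I) ≤ rlen I J := by
  obtain htop | hne := eq_or_ne (rlen I J) ⊤
  · rw [htop]; exact le_top
  obtain ⟨n, hn⟩ := ENat.ne_top_iff_exists.1 hne
  induction n generalizing J with
  | zero =>
    obtain rfl | hlt := h.eq_or_lt
    · rw [rlen_self, rlen_self]
    · obtain ⟨K, hK, hc⟩ := exists_covBy hlt hne
      rw [rlen_add hK hc.le, rlen_eq_one hc] at hn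
      exact absurd hn.symm (by simp)
  | succ n ih =>
    obtain rfl | hlt := h.eq_or_lt
    · rw [rlen_self, rlen_self]
    · obtain ⟨K, hK, hc⟩ := exists_covBy hlt hne
      have hadd := rlen_add hK hc.le
      rw [rlen_eq_one hc] at hadd
      have hKn : (n : ℕ∞) = rlen I K := by
        rw [← hn] at hadd
        push_cast at hadd
        exact (ENat.add_left_injective_of_ne_top ENat.one_ne_top) hadd
      have := ih hK (by rw [← hKn]; simp) hKn
      rw [rlen_add (one_div_anti hc.le) (one_div_anti hK), hadd, add_comm]
      exact add_le_add this (dual_covBy h1 hc)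

end dual

lemma inv_max_len (R Q : Type) [CommRing R] [IsLocalRing R] [CommRing Q] [Algebra R Q]
    [IsFractionRing R Q] [IsReduced R] (hdim : ringKrullDim R = 1)
    (hGor2 : Nonempty ((extM R (ResidueField R) R 1) ≃ₗ[R] ResidueField R)) :
    rlen (1 : Submodule R Q)
      (1 / Submodule.map (Algebra.linearMap R Q) (maximalIdeal R)) ≤ 1 := by
  obtain ⟨e⟩ := hGor2
  obtain ⟨φ, hφ⟩ := ext_part R
  have hinj : Function.Injective (algebraMap R Q) := IsFractionRing.injective R Q
  -- no element is killed by the maximal ideal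
  have hann : ∀ a : R, (∀ y ∈ maximalIdeal R, a * y = 0) → a = 0 := by
    intro a ha
    by_cases hu : IsUnit a
    · exfalso
      have h0 : maximalIdeal R = ⊥ := by
        rw [eq_bot_iff]
        intro y hy
        exact (hu.mul_right_eq_zero).1 (ha y hy)
      have hf : IsField R := IsLocalRing.isField_iff_maximalIdeal_eq.2 h0
      rw [ringKrullDim_eq_zero_of_isField hf] at hdim
      exact zero_ne_one hdim
    · have := ha a hu
      exact (IsNilpotent.eq_zero ⟨2, by rw [pow_two]; exact this⟩)
  have hannQ : ∀ q : Q, (∀ y ∈ maximalIdeal R, q * algebraMap R Q y = 0) → q = 0 := by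
    intro q hq
    obtain ⟨a, s, rfl⟩ := IsLocalization.exists_mk'_eq (nonZeroDivisors R) q
    have : a = 0 := by
      apply hann
      intro y hy
      apply hinj
      have h1 := hq y hy
      have h2 : IsLocalization.mk' Q a s * algebraMap R Q s = algebraMap R Q a :=
        IsLocalization.mk'_spec _ _ _
      rw [map_mul, ← h2, mul_right_comm, h1, zero_mul, map_zero]
    rw [this, IsLocalization.mk'_zero]
  let N : Submodule R Q := 1 / Submodule.map (Algebra.linearMap R Q) (maximalIdeal R)
  let ι : R ≃ₗ[R] (1 : Submodule R Q) :=
    (LinearEquiv.ofInjective (Algebra.linearMap R Q) hinj).trans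
      (LinearEquiv.ofEq _ _ Submodule.one_eq_range.symm)
  have hι : ∀ z, algebraMap R Q (ι.symm z) = z := by
    intro z
    obtain ⟨r, rfl⟩ := ι.surjective z
    rw [ι.symm_apply_apply]; rfl
  have hmem : ∀ (q : N) (y : maximalIdeal R), (q : Q) * algebraMap R Q y ∈ (1 : Submodule R Q) :=
    fun q y => Submodule.mem_div_iff_forall_mul_mem.1 q.2 _ ⟨y, y.2, rfl⟩
  let θ : N →ₗ[R] (maximalIdeal R →ₗ[R] R) :=
    LinearMap.mk₂ R (fun q y => ι.symm ⟨(q : Q) * algebraMap R Q y, hmem q y⟩)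
      (by
        intro a b y
        apply hinj
        rw [map_add]
        simp only [hι]
        simp [add_mul])
      (by
        intro r a y
        apply hinj
        rw [smul_eq_mul, map_mul]
        simp only [hι]
        simp [Algebra.smul_def, mul_assoc])
      (by
        intro a y z
        apply hinj
        rw [map_add]
        simp only [hι]
        simp [mul_add])
      (by
        intro r a y
        apply hinj
        rw [smul_eq_mul, map_mul]
        simp only [hι]
        simp [mul_left_comm])
  have hθ : ∀ q y, algebraMap R Q (θ q y) = (q : Q) * algebraMap R Q y := fun q y => hι _
  let Φ : N →ₗ[R] ResidueField R := e.toLinearMap ∘ₗ φ ∘ₗ θ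
  have hker : ∀ q : N, Φ q = 0 → (q : Q) ∈ (1 : Submodule R Q) := by
    intro q hq
    have hq' : φ (θ q) = 0 := e.injective (by rw [map_zero]; exact hq)
    obtain ⟨r, hr⟩ := hφ _ hq'
    have : (q : Q) - algebraMap R Q r = 0 := by
      apply hannQ
      intro y hy
      rw [sub_mul, ← hθ q ⟨y, hy⟩, hr, map_mul, sub_self]
    rw [sub_eq_zero.1 this]
    exact Submodule.algebraMap_mem r
  have hle : LinearMap.ker Φ ≤ Submodule.comap N.subtype 1 := fun q hq => hker q hq
  have hlen : Module.length R (ResidueField R) = 1 := by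
    rw [Module.length_eq_one_iff]
    exact isSimpleModule_iff_quot_maximal.2
      ⟨maximalIdeal R, inferInstance, ⟨LinearEquiv.refl R _⟩⟩
  calc rlen 1 N ≤ Module.length R (N ⧸ LinearMap.ker Φ) :=
        Module.length_le_of_surjective (Submodule.factor hle) (Submodule.factor_surjective hle)
    _ = Module.length R (LinearMap.range Φ) := Φ.quotKerEquivRange.length_eq
    _ ≤ Module.length R (ResidueField R) :=
        Module.length_le_of_injective (Submodule.subtype _) (Submodule.injective_subtype _)
    _ = 1 := hlen

/-- **The `n = 2δ` theorem.** Let `R` be a reduced 1-dimensional Noetherian local ring with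
finite normalization `R̄` and conductor `c`, and assume `R` is Gorenstein (i.e. `R` is its own
dualizing module: `Ext^i_R(k, R) = δ_{i,1}·k`). Then `length(R̄/R) = length(R/c)`;
equivalently `length(R̄/cR̄) = 2·length(R/c)`. -/
theorem n_eq_two_delta (R : Type) [CommRing R] [IsNoetherianRing R] [IsLocalRing R]
    [IsReduced R] (hdim : ringKrullDim R = 1)
    (hfin : Module.Finite R (integralClosure R (FractionRing R)))
    (hGor1 : ∀ i : ℕ, i ≠ 1 → Subsingleton (extM R (ResidueField R) R i))
    (hGor2 : Nonempty ((extM R (ResidueField R) R 1) ≃ₗ[R] ResidueField R))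
    (c : Ideal R)
    (hc : ∀ r : R, r ∈ c ↔ ∀ x : (integralClosure R (FractionRing R)),
      r • x ∈ LinearMap.range (Algebra.linearMap R (integralClosure R (FractionRing R)))) :
    mlen R ((integralClosure R (FractionRing R)) ⧸
        LinearMap.range (Algebra.linearMap R (integralClosure R (FractionRing R)))) =
      mlen R (R ⧸ c) ∧
    mlen R ((integralClosure R (FractionRing R)) ⧸
        (c • (⊤ : Submodule R (integralClosure R (FractionRing R))))) =
      mlen R (R ⧸ c) + mlen R (R ⧸ c) := by
  
  have hinv := inv_max_len R (FractionRing R) hdim hGor2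
  have hinj : Function.Injective (algebraMap R (FractionRing R)) :=
    IsFractionRing.injective R (FractionRing R)
  let B : Submodule R (FractionRing R) :=
    Subalgebra.toSubmodule (integralClosure R (FractionRing R))
  let C : Submodule R (FractionRing R) := 1 / B
  have h1B : (1 : Submodule R (FractionRing R)) ≤ B := by
    rw [Submodule.one_le]
    exact one_mem (integralClosure R (FractionRing R))
  have hC1 : C ≤ 1 := by
    intro x hx
    have := Submodule.mem_div_iff_forall_mul_mem.1 hx 1 (h1B (Submodule.one_le.1 le_rfl))
    rwa [mul_one] at this
  have h11 : (1 : Submodule R (FractionRing R)) / 1 = 1 := by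
    apply le_antisymm
    · intro x hx
      have := Submodule.mem_div_iff_forall_mul_mem.1 hx 1 (Submodule.one_le.1 le_rfl)
      rwa [mul_one] at this
    · rw [Submodule.le_div_iff_mul_le, one_mul]
  have hBC : B ≤ 1 / C := by
    intro x hx
    rw [Submodule.mem_div_iff_forall_mul_mem]
    intro y hy
    rw [mul_comm]
    exact Submodule.mem_div_iff_forall_mul_mem.1 hy x hx
  have hle1 : rlen C 1 ≤ rlen 1 B := by
    have := dual_le hinv h1B
    rwa [h11] at this
  have hle2 : rlen 1 B ≤ rlen C 1 := by
    refine (rlen_mono h1B hBC).trans ?_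
    have := dual_le hinv hC1
    rwa [h11] at this
  have heq : rlen 1 B = rlen C 1 := le_antisymm hle2 hle1
  -- membership of the conductor
  have hcC : ∀ r : R, r ∈ c ↔ algebraMap R (FractionRing R) r ∈ C := by
    intro r
    rw [hc, Submodule.mem_div_iff_forall_mul_mem]
    constructor
    · intro h y hy
      obtain ⟨s, hs⟩ := h ⟨y, hy⟩
      rw [Submodule.mem_one]
      refine ⟨s, ?_⟩
      have := congrArg Subtype.val hs
      rw [← Algebra.smul_def]
      exact this
    · intro h x
      obtain ⟨s, hs⟩ := Submodule.mem_one.1 (h x x.2)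
      refine ⟨s, Subtype.ext ?_⟩
      rw [← Algebra.smul_def] at hs
      exact hs
  let e : B ≃ₗ[R] integralClosure R (FractionRing R) :=
    Subalgebra.toSubmoduleEquiv (integralClosure R (FractionRing R))
  have he : ∀ x, ((e x : integralClosure R (FractionRing R)) : FractionRing R) = x := fun x => rfl
  have hes : ∀ x, ((e.symm x : B) : FractionRing R) = x := fun x => rfl
  have L1 : Module.length R ((integralClosure R (FractionRing R)) ⧸
        LinearMap.range (Algebra.linearMap R (integralClosure R (FractionRing R)))) =
      rlen 1 B := by
    refine (LinearEquiv.length_eq (Submodule.Quotient.equiv _ _ e ?_)).symm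
    ext x
    rw [Submodule.mem_map_equiv, Submodule.mem_comap, Submodule.subtype_apply, hes,
      Submodule.mem_one, LinearMap.mem_range]
    constructor
    · rintro ⟨y, hy⟩
      exact ⟨y, Subtype.ext hy⟩
    · rintro ⟨y, hy⟩
      exact ⟨y, congrArg Subtype.val hy⟩
  have L2 : Module.length R (R ⧸ c) = rlen C 1 := by
    let ι : R ≃ₗ[R] (1 : Submodule R (FractionRing R)) :=
      (LinearEquiv.ofInjective (Algebra.linearMap R (FractionRing R)) hinj).trans
        (LinearEquiv.ofEq _ _ Submodule.one_eq_range.symm)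
    refine LinearEquiv.length_eq (Submodule.Quotient.equiv _ _ ι ?_)
    ext z
    obtain ⟨r, rfl⟩ := ι.surjective z
    rw [Submodule.mem_map_equiv, ι.symm_apply_apply, hcC]
    rfl
  have L3 : Module.length R ((integralClosure R (FractionRing R)) ⧸
        (c • (⊤ : Submodule R (integralClosure R (FractionRing R))))) = rlen C B := by
    refine (LinearEquiv.length_eq (Submodule.Quotient.equiv _ _ e ?_)).symm
    ext x
    rw [Submodule.mem_map_equiv, Submodule.mem_comap, Submodule.subtype_apply, hes]
    constructor
    · intro hx
      obtain ⟨r, hr⟩ := Submodule.mem_one.1 (hC1 hx)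
      have hrc : r ∈ c := by rw [hcC, hr]; exact hx
      have : x = r • (1 : integralClosure R (FractionRing R)) := by
        apply Subtype.ext
        rw [← hr, Algebra.algebraMap_eq_smul_one]
        rfl
      rw [this]
      exact Submodule.smul_mem_smul hrc Submodule.mem_top
    · intro hx
      induction hx using Submodule.smul_induction_on' with
      | smul r hr y hy =>
        rw [Submodule.mem_div_iff_forall_mul_mem]
        intro z hz
        have h2 := Submodule.mem_div_iff_forall_mul_mem.1 ((hcC r).1 hr) (y * z)
          ((integralClosure R (FractionRing R)).mul_mem y.2 hz)
        rw [← mul_assoc, ← Algebra.smul_def] at h2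
        exact h2
      | add a ha b hb h1 h2 => exact add_mem h1 h2
  constructor
  · unfold mlen
    rw [← Module.coe_length, ← Module.coe_length, L1, L2, heq]
  · unfold mlen
    rw [← Module.coe_length, ← Module.coe_length, L3, L2, rlen_add hC1 h1B, heq]
    rfl
end

section
/- Let (x, X) be a local Cohen–Macaulay scheme of dimension n ≥ 3 with dualizing module ω, and Ω a finite torsion-free module such that for every torsion-free maximal Cohen–Macaulay module M, the dual Hom(M, Ω) is also torsion free and maximal Cohen–Macaulay. Then Ext^j(k, Ω) = 0 for all j ≠ n, i.e., Ω is a direct sum of copies of ω. -/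
open CategoryTheory IsLocalRing

lemma extM_iff_exact (R : Type) [CommRing R] (M N : Type)
    [AddCommGroup M] [Module R M] [AddCommGroup N] [Module R N]
    (P : ProjectiveResolution (ModuleCat.of R M)) (n : ℕ) :
    Subsingleton (extM R M N n) ↔
      ∀ f : P.complex.X n ⟶ ModuleCat.of R N, P.complex.d (n+1) n ≫ f = 0 →
        ∃ g : P.complex.X ((ComplexShape.up ℕ).prev n) ⟶ ModuleCat.of R N,
          P.complex.d n ((ComplexShape.up ℕ).prev n) ≫ g = f := by
  rw [← ModuleCat.isZero_iff_subsingleton]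
  have e := P.isoExt (R := R) n (ModuleCat.of R N)
  rw [show extM R M N n = ((Ext R (ModuleCat R) n).obj (Opposite.op (ModuleCat.of R M))).obj (ModuleCat.of R N) from rfl, e.isZero_iff, ← HomologicalComplex.exactAt_iff_isZero_homology, 
    HomologicalComplex.exactAt_iff' _ _ n (n+1) rfl (by simp), ShortComplex.moduleCat_exact_iff]
  rfl

lemma extM_iff (R : Type) [CommRing R] (M N : Type)
    [AddCommGroup M] [Module R M] [AddCommGroup N] [Module R N] (n : ℕ) :
    Subsingleton (extM R M N n) ↔
      Subsingleton (Abelian.Ext (ModuleCat.of R M) (ModuleCat.of R N) n) := by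
  let P := projectiveResolution (ModuleCat.of R M)
  rw [extM_iff_exact R M N P]
  rcases n with _ | n
  · have hd : P.complex.d 0 ((ComplexShape.up ℕ).prev 0) = 0 := by
      apply P.complex.shape
      simp
    rw [hd]
    constructor
    · intro h
      refine subsingleton_of_forall_eq 0 fun x => ?_
      obtain ⟨f, hf, rfl⟩ := P.extMk_surjective x 1 rfl
      obtain ⟨g, hg⟩ := h f hf
      simp only [Limits.zero_comp] at hg
      subst hg
      simp
    · intro h f hf
      refine ⟨0, ?_⟩
      have : Subsingleton (ModuleCat.of R M ⟶ ModuleCat.of R N) :=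
        (Abelian.Ext.addEquiv₀ (X := ModuleCat.of R M) (Y := ModuleCat.of R N)).symm.toEquiv.subsingleton
      have h2 := P.exact₀.g_desc f hf
      have : P.exact₀.desc f hf = 0 := Subsingleton.elim (α := ModuleCat.of R M ⟶ ModuleCat.of R N) _ _
      rw [← h2, this, Limits.zero_comp]
      exact Limits.comp_zero.symm
  · have hp : (ComplexShape.up ℕ).prev (n+1) = n := by simp
    rw [hp]
    constructor
    · intro h
      refine subsingleton_of_forall_eq 0 fun x => ?_
      obtain ⟨f, hf, rfl⟩ := P.extMk_surjective x (n+1+1) rfl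
      rw [P.extMk_eq_zero_iff _ _ _ _ n rfl]
      exact h f hf
    · intro h f hf
      rw [← P.extMk_eq_zero_iff f _ rfl hf n rfl]
      exact Subsingleton.elim _ _

lemma coheight_of_regular (R : Type) [CommRing R] [IsNoetherianRing R] [IsLocalRing R]
    (rs : List R) (hrs : ∀ r ∈ rs, r ∈ maximalIdeal R) :
    ∀ (M : Type) [AddCommGroup M] [Module R M] [Module.Finite R M],
      RingTheory.Sequence.IsWeaklyRegular M rs → ∀ P : PrimeSpectrum R,
        P.asIdeal ∈ associatedPrimes R M → (rs.length : ℕ∞) ≤ Order.coheight P := by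
  induction rs with
  | nil => intro M _ _ _ _ P _; simp
  | cons x rs ih =>
    intro M _ _ _ hreg P hP
    rw [RingTheory.Sequence.isWeaklyRegular_cons_iff] at hreg
    obtain ⟨hx, hreg⟩ := hreg
    rw [AssociatedPrimes.mem_iff, isAssociatedPrime_iff] at hP
    obtain ⟨hPp, z, hz⟩ := hP
    have hmem : ∀ a : R, a ∈ P.asIdeal ↔ a • z = 0 := by
      intro a
      rw [hz, Submodule.mem_colon_singleton, Submodule.mem_bot]
    have hz0 : z ≠ 0 := by
      rintro rfl
      exact hPp.ne_top ((Ideal.eq_top_iff_one _).2 ((hmem 1).2 (smul_zero _)))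
    have hxP : x ∉ P.asIdeal := by
      intro h
      rw [hmem] at h
      exact hz0 (hx (by simpa using h))
    have hxm : x ∈ maximalIdeal R := hrs x (by simp)
    let H : Submodule R M := Submodule.torsionBySet R M (P.asIdeal : Set R)
    have hH : ∀ y, y ∈ H ↔ ∀ a ∈ P.asIdeal, a • y = 0 := by
      intro y
      simp [H, Submodule.mem_torsionBySet_iff]
    have hzH : z ∈ H := (hH z).2 fun a ha => (hmem a).1 ha
    have hHle : ¬ H ≤ Ideal.span {x} • H := by
      intro hle
      have := Submodule.eq_bot_of_le_smul_of_le_jacobson_bot (Ideal.span {x}) H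
        (IsNoetherian.noetherian H) hle (by
          rw [IsLocalRing.jacobson_eq_maximalIdeal _ bot_ne_top, Ideal.span_singleton_le_iff_mem]
          exact hxm)
      rw [this] at hzH
      exact hz0 (by simpa using hzH)
    obtain ⟨y, hyH, hy⟩ := Set.not_subset.1 hHle
    let q : M →ₗ[R] QuotSMulTop x M := Submodule.mkQ _
    have hq0 : q y ≠ 0 := by
      intro h0
      rw [Submodule.mkQ_apply, Submodule.Quotient.mk_eq_zero,
        Submodule.mem_smul_pointwise_iff_exists] at h0
      obtain ⟨w, -, hw⟩ := h0
      apply hy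
      rw [SetLike.mem_coe, Submodule.ideal_span_singleton_smul,
        Submodule.mem_smul_pointwise_iff_exists]
      refine ⟨w, (hH w).2 fun a ha => hx ?_, hw⟩
      have := (hH y).1 hyH a ha
      simp only [smul_zero]
      rw [smul_comm, hw, this]
    obtain ⟨Q, hQ, hle⟩ := exists_le_isAssociatedPrime_of_isNoetherianRing R (q y) hq0
    have hxQ : x ∈ Q := hle (by
      rw [Submodule.mem_colon_singleton, Submodule.mem_bot, ← map_smul, Submodule.mkQ_apply,
        Submodule.Quotient.mk_eq_zero]
      exact Submodule.smul_mem_pointwise_smul _ _ _ trivial)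
    have hPQ : P.asIdeal ≤ Q := fun a ha => hle (by
      rw [Submodule.mem_colon_singleton, Submodule.mem_bot, ← map_smul, (hH y).1 hyH a ha,
        map_zero])
    let Q' : PrimeSpectrum R := ⟨Q, hQ.isPrime⟩
    have hlt : P < Q' := by
      rw [← PrimeSpectrum.asIdeal_lt_asIdeal]
      exact lt_of_le_of_ne hPQ fun h => hxP (h ▸ hxQ)
    have h1 := ih (fun r hr => hrs r (by simp [hr])) (QuotSMulTop x M) hreg Q' hQ
    calc ((x :: rs).length : ℕ∞) = (rs.length : ℕ∞) + 1 := by simp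
      _ ≤ Order.coheight Q' + 1 := by gcongr
      _ ≤ _ := Order.coheight_add_one_le hlt

lemma tf_of_mcm (R : Type) [CommRing R] [IsNoetherianRing R] [IsLocalRing R]
    (n : ℕ) (hdim : ringKrullDim R = n)
    (M : Type) [AddCommGroup M] [Module R M] [Module.Finite R M]
    (hM : ∀ i : ℕ, i < n → Subsingleton
      (Abelian.Ext (ModuleCat.of R (ResidueField R)) (ModuleCat.of R M) i)) :
    ∀ P ∈ associatedPrimes R M, P ∈ minimalPrimes R := by
  intro P hP
  have hPp : P.IsPrime := hP.isPrime
  have hnt : Nontrivial M := by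
    by_contra h
    rw [not_nontrivial_iff_subsingleton] at h
    exact not_isAssociatedPrime_of_subsingleton hP
  have hlt : maximalIdeal R • (⊤ : Submodule R M) < ⊤ := by
    refine lt_of_le_of_ne le_top fun h => ?_
    have := Submodule.eq_bot_of_le_smul_of_le_jacobson_bot (maximalIdeal R) (⊤ : Submodule R M)
      (IsNoetherian.noetherian _) h.ge (by
        rw [IsLocalRing.jacobson_eq_maximalIdeal _ bot_ne_top])
    exact bot_ne_top this.symm
  have hfin : Module.Finite R (ResidueField R) :=
    inferInstanceAs (Module.Finite R (R ⧸ maximalIdeal R))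
  have hsupp : Module.support R (ResidueField R) =
      PrimeSpectrum.zeroLocus (maximalIdeal R : Set R) := by
    rw [Module.support_eq_zeroLocus]
    congr 1
    rw [show Module.annihilator R (ResidueField R) = Module.annihilator R (R ⧸ maximalIdeal R)
      from rfl, Ideal.annihilator_quotient]
  obtain ⟨rs, hlen, hmem, hreg⟩ := ModuleCat.exists_isRegular_of_exists_subsingleton_ext
    (maximalIdeal R) n (ModuleCat.of R M) hlt (ModuleCat.of R (ResidueField R)) hsupp hM
  have hco := coheight_of_regular R rs hmem M hreg.toIsWeaklyRegular ⟨P, hPp⟩ hP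
  rw [minimalPrimes_eq_minimals]
  refine ⟨hPp, fun Q hQ hle => ?_⟩
  by_contra hnle
  have hltQ : (⟨Q, hQ⟩ : PrimeSpectrum R) < ⟨P, hPp⟩ := by
    rw [← PrimeSpectrum.asIdeal_lt_asIdeal]
    exact lt_of_le_not_ge hle hnle
  have h1 := Order.coheight_add_one_le hltQ
  have h2 := Order.coheight_le_krullDim (⟨Q, hQ⟩ : PrimeSpectrum R)
  rw [show Order.krullDim (PrimeSpectrum R) = n from hdim] at h2
  have h3 : Order.coheight (⟨Q, hQ⟩ : PrimeSpectrum R) ≤ (n : ℕ∞) := by exact_mod_cast h2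
  rw [hlen] at hco
  have h4 : ((n + 1 : ℕ) : ℕ∞) ≤ n := by
    push_cast
    exact le_trans (le_trans (by gcongr) h1) h3
  have h5 : n + 1 ≤ n := by exact_mod_cast h4
  omega

lemma ext_free (R : Type) [CommRing R] (X : ModuleCat.{0} R) (i : ℕ)
    (h : Subsingleton (Abelian.Ext X (ModuleCat.of R R) i))
    (F : Type) [AddCommGroup F] [Module R F] [Module.Free R F] [Module.Finite R F] :
    Subsingleton (Abelian.Ext X (ModuleCat.of R F) i) := by
  refine subsingleton_of_forall_eq 0 fun x => ?_
  let b := Module.Free.chooseBasis R F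
  have hid : 𝟙 (ModuleCat.of R F) = ∑ j, ModuleCat.ofHom (b.coord j) ≫
      ModuleCat.ofHom (LinearMap.toSpanSingleton R F (b j)) := by
    ext v
    simpa [ModuleCat.hom_sum] using (b.sum_repr v).symm
  rw [← Abelian.Ext.comp_mk₀_id x, hid, Abelian.Ext.mk₀_sum, Abelian.Ext.comp_sum]
  refine Finset.sum_eq_zero fun j _ => ?_
  rw [← Abelian.Ext.mk₀_comp_mk₀, ← Abelian.Ext.comp_assoc_of_second_deg_zero,
    Subsingleton.elim (x.comp _ _) 0, Abelian.Ext.zero_comp]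

lemma exists_syz (R : Type) [CommRing R] [IsNoetherianRing R] [IsLocalRing R] (n : ℕ)
    (hCM : ∀ i : ℕ, i < n → Subsingleton
      (Abelian.Ext (ModuleCat.of R (ResidueField R)) (ModuleCat.of R R) i))
    (Y : ModuleCat.{0} R) (m : ℕ) :
    ∃ M : ModuleCat.{0} R, Module.Finite R M ∧
      (∀ i : ℕ, i < n → i < m → Subsingleton
        (Abelian.Ext (ModuleCat.of R (ResidueField R)) M i)) ∧
      (∀ j, 1 ≤ j → ∀ e : Abelian.Ext M Y j, ∀ r ∈ maximalIdeal R, r • e = 0) ∧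
      (∀ j, 1 ≤ j → Subsingleton (Abelian.Ext M Y j) →
        Subsingleton (Abelian.Ext (ModuleCat.of R (ResidueField R)) Y (j + m))) := by
  induction m with
  | zero =>
    refine ⟨ModuleCat.of R (ResidueField R),
      inferInstanceAs (Module.Finite R (R ⧸ maximalIdeal R)), by simp, ?_, by simp⟩
    intro j _ e r hr
    have h0 : r • 𝟙 (ModuleCat.of R (ResidueField R)) = 0 := by
      ext v
      obtain ⟨a, rfl⟩ := IsLocalRing.residue_surjective v
      simp [Algebra.smul_def, (IsLocalRing.residue_eq_zero_iff r).2 hr]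
    have : r • e = (Abelian.Ext.mk₀ (r • 𝟙 (ModuleCat.of R (ResidueField R)))).comp e
        (zero_add j) := by simp [Abelian.Ext.mk₀_smul]
    rw [this, h0]
    simp
  | succ m ih =>
    obtain ⟨M, hfin, hdep, hann, hvan⟩ := ih
    obtain ⟨F, _, _, _, _, f, hf⟩ := Module.exists_finite_presentation R M
    have hS := LinearMap.shortExact_shortComplexKer hf
    have hproj : Projective f.shortComplexKer.X₂ :=
      (IsProjective.iff_projective (R := R) F).1 inferInstance
    refine ⟨f.shortComplexKer.X₁, inferInstanceAs (Module.Finite R (LinearMap.ker f)), ?_, ?_, ?_⟩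
    · intro i hi him
      have hF : Subsingleton (Abelian.Ext (ModuleCat.of R (ResidueField R))
        f.shortComplexKer.X₂ i) := ext_free R _ i (hCM i hi) F
      refine subsingleton_of_forall_eq 0 fun x => ?_
      rcases i with _ | i
      · have := hS.mono_f
        apply Abelian.Ext.postcomp_mk₀_injective_of_mono _ f.shortComplexKer.f
        exact Subsingleton.elim _ _
      · obtain ⟨y, rfl⟩ := Abelian.Ext.covariant_sequence_exact₁ _ hS x
          (Subsingleton.elim _ _) rfl
        have := hdep i (by omega) (by omega)
        rw [show y = 0 from Subsingleton.elim (α := Abelian.Ext (ModuleCat.of R (ResidueField R)) M i) _ _]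
        simp
    · intro j hj e r hr
      obtain ⟨j, rfl⟩ : ∃ k, j = k + 1 := ⟨j - 1, by omega⟩
      have h1 := hann (1 + (j + 1)) (by omega) (hS.extClass.comp e rfl) r hr
      have h2 : hS.extClass.comp (r • e) rfl = 0 := by
        rw [Abelian.Ext.comp_smul]; exact h1
      obtain ⟨y, hy⟩ := Abelian.Ext.contravariant_sequence_exact₁ hS Y (r • e) rfl h2
      rw [← hy, Abelian.Ext.eq_zero_of_projective y]
      simp
    · intro j hj hsub
      rw [show j + (m + 1) = (1 + j) + m by ring]
      apply hvan _ (by omega)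
      refine subsingleton_of_forall_eq 0 fun x => ?_
      obtain ⟨j, rfl⟩ : ∃ k, j = k + 1 := ⟨j - 1, by omega⟩
      obtain ⟨y, hy⟩ := Abelian.Ext.contravariant_sequence_exact₃ hS Y
        (n₁ := 1 + (j + 1)) x (by
          have : ∀ (l : ℕ) (z : Abelian.Ext f.shortComplexKer.X₂ Y (1 + l)), z = 0 := by
            intro l
            rw [add_comm]
            intro z
            exact Abelian.Ext.eq_zero_of_projective z
          exact this _ _) rfl
      rw [← hy, Subsingleton.elim y 0]
      simp

lemma ext_one_vanish (R : Type) [CommRing R] [IsNoetherianRing R] [IsLocalRing R]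
    (M F Ω : Type) [AddCommGroup M] [Module R M] [AddCommGroup F] [Module R F]
    [Module.Free R F] [AddCommGroup Ω] [Module R Ω]
    (f : F →ₗ[R] M) (hf : Function.Surjective f)
    (hM : Subsingleton (Abelian.Ext (ModuleCat.of R (ResidueField R))
      (ModuleCat.of R (M →ₗ[R] Ω)) 2))
    (hF : Subsingleton (Abelian.Ext (ModuleCat.of R (ResidueField R))
      (ModuleCat.of R (F →ₗ[R] Ω)) 1))
    (hK : Subsingleton (Abelian.Ext (ModuleCat.of R (ResidueField R))
      (ModuleCat.of R (LinearMap.ker f →ₗ[R] Ω)) 0))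
    (hann : ∀ e : Abelian.Ext (ModuleCat.of R M) (ModuleCat.of R Ω) 1,
      ∀ r ∈ maximalIdeal R, r • e = 0) :
    Subsingleton (Abelian.Ext (ModuleCat.of R M) (ModuleCat.of R Ω) 1) := by
  have hS := LinearMap.shortExact_shortComplexKer hf
  have hproj : Projective f.shortComplexKer.X₂ :=
    (IsProjective.iff_projective (R := R) F).1 inferInstance
  refine subsingleton_of_forall_eq 0 fun e => ?_
  obtain ⟨y, hy⟩ := Abelian.Ext.contravariant_sequence_exact₃ hS (ModuleCat.of R Ω)
    (n₁ := 1) e (Abelian.Ext.eq_zero_of_projective (n := 0) _) (n₀ := 0) rfl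
  obtain ⟨φ, rfl⟩ := (Abelian.Ext.mk₀_bijective _ _).2 y
  let res : (F →ₗ[R] Ω) →ₗ[R] (LinearMap.ker f →ₗ[R] Ω) :=
    LinearMap.lcomp R Ω (LinearMap.ker f).subtype
  let C := LinearMap.range res
  let φ' : LinearMap.ker f →ₗ[R] Ω := φ.hom
  have hr : ∀ r ∈ maximalIdeal R, r • φ' ∈ C := by
    intro r hr
    have h1 : hS.extClass.comp (Abelian.Ext.mk₀ (r • φ)) (add_zero 1) = 0 := by
      rw [Abelian.Ext.mk₀_smul, Abelian.Ext.comp_smul, hy]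
      exact hann e r hr
    obtain ⟨z, hz⟩ := Abelian.Ext.contravariant_sequence_exact₁ hS (ModuleCat.of R Ω) _ _ h1
    obtain ⟨ψ, rfl⟩ := (Abelian.Ext.mk₀_bijective _ _).2 z
    rw [Abelian.Ext.mk₀_comp_mk₀] at hz
    have h2 := (Abelian.Ext.mk₀_bijective _ _).1 hz
    refine ⟨ψ.hom, ?_⟩
    have h3 := congrArg ModuleCat.Hom.hom h2
    exact h3
  have hφ : φ' ∈ C := by
    have hC1 : Subsingleton (Abelian.Ext (ModuleCat.of R (ResidueField R))
        (ModuleCat.of R C) 1) := by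
      have hex : Function.Exact (LinearMap.lcomp R Ω f) res.rangeRestrict := by
        intro g
        constructor
        · intro hg
          have hg' : ∀ v, f v = 0 → g v = 0 := by
            intro v hv
            have := congrArg Subtype.val hg
            exact DFunLike.congr_fun this ⟨v, hv⟩
          have hker : LinearMap.ker f ≤ LinearMap.ker g := fun v hv => hg' v hv
          refine ⟨(Submodule.liftQ _ g hker) ∘ₗ (f.quotKerEquivOfSurjective hf).symm, ?_⟩
          ext v
          have : (f.quotKerEquivOfSurjective hf).symm (f v) = Submodule.Quotient.mk v := by
            rw [LinearEquiv.symm_apply_eq]; rfl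
          simp [this]
        · rintro ⟨h, rfl⟩
          ext ⟨v, hv⟩
          have hv' : f v = 0 := hv
          simp [res, hv']
      let S1 := ModuleCat.shortComplexOfCompEqZero (LinearMap.lcomp R Ω f) res.rangeRestrict
        hex.linearMap_comp_eq_zero
      have hS1 : S1.ShortExact :=
        { exact := ModuleCat.shortComplex_exact _ hex
          mono_f := by
            rw [ModuleCat.mono_iff_injective]
            intro a b hab
            ext v
            obtain ⟨w, rfl⟩ := hf v
            exact DFunLike.congr_fun (show a ∘ₗ f = b ∘ₗ f from hab) w
          epi_g := by
            rw [ModuleCat.epi_iff_surjective]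
            exact res.surjective_rangeRestrict }
      refine subsingleton_of_forall_eq 0 fun x => ?_
      obtain ⟨y, hy⟩ := Abelian.Ext.covariant_sequence_exact₃ _ hS1 x (n₁ := 2) rfl
        (Subsingleton.elim (α := Abelian.Ext (ModuleCat.of R (ResidueField R))
          (ModuleCat.of R (M →ₗ[R] Ω)) 2) _ _)
      have hy0 : y = 0 := Subsingleton.elim (α := Abelian.Ext (ModuleCat.of R (ResidueField R))
        (ModuleCat.of R (F →ₗ[R] Ω)) 1) _ _
      rw [← hy, hy0]
      simp
    have hex : Function.Exact C.subtype C.mkQ := LinearMap.exact_subtype_mkQ C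
    let S2 := ModuleCat.shortComplexOfCompEqZero C.subtype C.mkQ hex.linearMap_comp_eq_zero
    have hS2 : S2.ShortExact :=
      { exact := ModuleCat.shortComplex_exact _ hex
        mono_f := by
          rw [ModuleCat.mono_iff_injective]
          exact C.injective_subtype
        epi_g := by
          rw [ModuleCat.epi_iff_surjective]
          exact C.mkQ_surjective }
    let u : (R ⧸ maximalIdeal R) →ₗ[R] ((LinearMap.ker f →ₗ[R] Ω) ⧸ C) :=
      Submodule.liftQ (maximalIdeal R) (LinearMap.toSpanSingleton R _ (C.mkQ φ')) (by
        intro r hr'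
        rw [LinearMap.mem_ker, LinearMap.toSpanSingleton_apply, ← map_smul, Submodule.mkQ_apply,
          Submodule.Quotient.mk_eq_zero]
        exact hr r hr')
    let U : ModuleCat.of R (ResidueField R) ⟶ S2.X₃ := ModuleCat.ofHom u
    obtain ⟨y, hy⟩ := Abelian.Ext.covariant_sequence_exact₃ _ hS2 (Abelian.Ext.mk₀ U)
      (n₁ := 1) rfl (Subsingleton.elim (α := Abelian.Ext (ModuleCat.of R (ResidueField R))
          (ModuleCat.of R C) 1) _ _)
    have hy0 : y = 0 := Subsingleton.elim (α := Abelian.Ext (ModuleCat.of R (ResidueField R))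
        (ModuleCat.of R (LinearMap.ker f →ₗ[R] Ω)) 0) _ _
    rw [hy0, Abelian.Ext.zero_comp] at hy
    have hU : U = 0 := (Abelian.Ext.mk₀_eq_zero_iff _).1 hy.symm
    have hu : u = 0 := congrArg ModuleCat.Hom.hom hU
    have h1 : u (Submodule.Quotient.mk 1) = 0 := by rw [hu]; rfl
    have h2 : C.mkQ φ' = 0 := by
      have h3 : (1 : R) • C.mkQ φ' = 0 := h1
      rwa [one_smul] at h3
    rwa [Submodule.mkQ_apply, Submodule.Quotient.mk_eq_zero] at h2
  obtain ⟨ψ, hψ⟩ := hφ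
  have hφψ : φ = f.shortComplexKer.f ≫ (ModuleCat.ofHom ψ : f.shortComplexKer.X₂ ⟶ _) := by
    apply ModuleCat.hom_ext
    exact hψ.symm
  rw [← hy, hφψ, ← Abelian.Ext.mk₀_comp_mk₀, hS.extClass_comp_assoc]

/-- **(Dao's appendix.)** Let `R` be local CM of dimension `n ≥ 3` with dualizing module `ω`.
If `Ω` is a finite torsion-free module such that `Hom_R(M, Ω)` is torsion free and maximal CM
for every torsion-free MCM module `M`, then `Ext^j(k, Ω) = 0` for all `j ≠ n`, i.e. `Ω` is a
direct sum of copies of `ω`. -/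
theorem cm_dualizing_unique (R : Type) [CommRing R] [IsNoetherianRing R] [IsLocalRing R]
    (n : ℕ) (hn : 3 ≤ n) (hdim : ringKrullDim R = n)
    (hCM : ∀ i : ℕ, i < n → Subsingleton (extM R (ResidueField R) R i))
    (ω : Type) [AddCommGroup ω] [Module R ω] [Module.Finite R ω]
    (hω1 : ∀ i : ℕ, i ≠ n → Subsingleton (extM R (ResidueField R) ω i))
    (hω2 : Nonempty ((extM R (ResidueField R) ω n) ≃ₗ[R] ResidueField R))
    (Ω : Type) [AddCommGroup Ω] [Module R Ω] [Module.Finite R Ω]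
    (hΩtf : ∀ P ∈ associatedPrimes R Ω, P ∈ minimalPrimes R)
    (hdual : ∀ (M : Type) [AddCommGroup M] [Module R M] [Module.Finite R M],
      (∀ P ∈ associatedPrimes R M, P ∈ minimalPrimes R) →
      (∀ i : ℕ, i < n → Subsingleton (extM R (ResidueField R) M i)) →
      ((∀ P ∈ associatedPrimes R (M →ₗ[R] Ω), P ∈ minimalPrimes R) ∧
        ∀ i : ℕ, i < n → Subsingleton (extM R (ResidueField R) (M →ₗ[R] Ω) i))) :
    ∀ j : ℕ, j ≠ n → Subsingleton (extM R (ResidueField R) Ω j) := by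
  simp only [extM_iff] at hCM hdual ⊢
  have hdual' : ∀ (M : Type) [AddCommGroup M] [Module R M] [Module.Finite R M],
      (∀ i : ℕ, i < n → Subsingleton
        (Abelian.Ext (ModuleCat.of R (ResidueField R)) (ModuleCat.of R M) i)) →
      ∀ i : ℕ, i < n → Subsingleton
        (Abelian.Ext (ModuleCat.of R (ResidueField R)) (ModuleCat.of R (M →ₗ[R] Ω)) i) := by
    intro M _ _ _ hM
    exact (hdual M (tf_of_mcm R n hdim M hM) hM).2
  intro j hj
  rcases lt_or_gt_of_ne hj with hlt | hgt
  · have h1 := hdual' R hCM j hlt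
    let e : ModuleCat.of R (R →ₗ[R] Ω) ≅ ModuleCat.of R Ω :=
      (LinearMap.ringLmapEquivSelf R R Ω).toModuleIso
    refine subsingleton_of_forall_eq 0 fun x => ?_
    have h2 : x = (x.comp (Abelian.Ext.mk₀ e.inv) (add_zero j)).comp (Abelian.Ext.mk₀ e.hom)
        (add_zero j) := by
      rw [Abelian.Ext.comp_assoc_of_second_deg_zero, Abelian.Ext.mk₀_comp_mk₀]
      simp
    rw [h2, Subsingleton.elim (x.comp _ _) 0, Abelian.Ext.zero_comp]
  · obtain ⟨m, rfl⟩ : ∃ m, j = 1 + m := ⟨j - 1, by omega⟩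
    obtain ⟨M, hfin, hdep, hann, hvan⟩ := exists_syz R n hCM (ModuleCat.of R Ω) m
    apply hvan 1 le_rfl
    obtain ⟨F, _, _, _, _, f, hf⟩ := Module.exists_finite_presentation R M
    have hM : ∀ i : ℕ, i < n → Subsingleton
        (Abelian.Ext (ModuleCat.of R (ResidueField R)) (ModuleCat.of R M) i) :=
      fun i hi => hdep i hi (by omega)
    have hF : ∀ i : ℕ, i < n → Subsingleton
        (Abelian.Ext (ModuleCat.of R (ResidueField R)) (ModuleCat.of R F) i) :=
      fun i hi => ext_free R _ i (hCM i hi) F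
    have hS := LinearMap.shortExact_shortComplexKer hf
    have hK : ∀ i : ℕ, i < n → Subsingleton
        (Abelian.Ext (ModuleCat.of R (ResidueField R)) (ModuleCat.of R (LinearMap.ker f)) i) := by
      intro i hi
      have hFi : Subsingleton (Abelian.Ext (ModuleCat.of R (ResidueField R))
        f.shortComplexKer.X₂ i) := hF i hi
      refine subsingleton_of_forall_eq 0 fun x => ?_
      rcases i with _ | i
      · have := hS.mono_f
        apply Abelian.Ext.postcomp_mk₀_injective_of_mono _ f.shortComplexKer.f
        exact Subsingleton.elim _ _
      · obtain ⟨y, hy⟩ := Abelian.Ext.covariant_sequence_exact₁ _ hS x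
          (Subsingleton.elim _ _) rfl
        have := hM i (by omega)
        rw [show y = 0 from Subsingleton.elim (α := Abelian.Ext (ModuleCat.of R (ResidueField R)) M i) _ _] at hy
        rw [← hy]
        simp
    exact ext_one_vanish R M F Ω f hf (hdual' M hM 2 (by omega)) (hdual' F hF 1 (by omega))
      (hdual' _ hK 0 (by omega)) (hann 1 le_rfl)
end
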